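/- Let X be a universally complete vector lattice with the countable sup property. Then X is uo-complete: every uo-Cauchy net in X uo-converges to some element of X. -/

import Mathlib

open Filter Set

section Defs

variable {X : Type*} [Lattice X] [AddCommGroup X]
  [CovariantClass X X (· + ·) (· ≤ ·)]

/-- A net `x` *order converges* to `l`: there is a set `A ⊆ X` (playing the role of a net
`a_γ ↓ 0`), downward directed with infimum `0`, such that every `a ∈ A` eventually
dominates `|x α - l|`. -/
def OrderTendsto {Γ : Type*} [Preorder Γ] (x : Γ → X) (l : X) : Prop :=
  ∃ A : Set X, A.Nonempty ∧ DirectedOn (· ≥ ·) A ∧ IsGLB A 0 ∧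
    ∀ a ∈ A, ∃ α₀ : Γ, ∀ α, α₀ ≤ α → |x α - l| ≤ a

/-- A net `x` *uo-converges* to `l` if `|x α - l| ⊓ y` order converges to `0`
for every `y ≥ 0`. -/
def UoTendsto {Γ : Type*} [Preorder Γ] (x : Γ → X) (l : X) : Prop :=
  ∀ y : X, 0 ≤ y → OrderTendsto (fun α => |x α - l| ⊓ y) 0

/-- A net is *order Cauchy* if the doubly indexed net of differences order converges to `0`. -/
def OrderCauchy {Γ : Type*} [Preorder Γ] (x : Γ → X) : Prop :=
  OrderTendsto (fun p : Γ × Γ => x p.1 - x p.2) 0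

/-- A net is *uo-Cauchy* if the doubly indexed net of differences uo-converges to `0`. -/
def UoCauchy {Γ : Type*} [Preorder Γ] (x : Γ → X) : Prop :=
  UoTendsto (fun p : Γ × Γ => x p.1 - x p.2) 0

/-- The Archimedean property for a lattice-ordered group. -/
def VLArchimedean (X : Type*) [Lattice X] [AddCommGroup X] : Prop :=
  ∀ x y : X, 0 ≤ x → (∀ n : ℕ, n • x ≤ y) → x = 0

end Defs

/-!
A uo-Cauchy net `x` need not be eventually order bounded, but it is so band by band. If `|x α - x
α₀| ⊓ u ≤ a` eventually, with `u ≰ a`, then `|x α|` is eventually bounded by `|x α₀| + a` on the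
band of `(u - a)⁺`. By Zorn's lemma there is a complete disjoint system of such bands; the local
bounds, projected onto their bands, are mutually disjoint, so they lie below a single element `b`.
The truncations of `x` to `[-b, b]` form an order Cauchy net and hence order converge to their limit
inferior. On each band of the system `x` eventually agrees with its truncation, so the difference
uo-converges to `0`.
-/

section Completeness

/-- Order completeness (Dedekind completeness): nonempty order bounded sets have suprema. -/
def OrderComplete (X : Type*) [Preorder X] : Prop :=
  ∀ S : Set X, S.Nonempty → BddBelow S → BddAbove S → ∃ s, IsLUB S s

/-- Lateral completeness: nonempty sets of mutually disjoint positive elements have suprema, where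
`a` and `b` are disjoint when `a ⊓ b = 0`. -/
def LaterallyComplete (X : Type*) [SemilatticeInf X] [Zero X] : Prop :=
  ∀ A : Set X, A.Nonempty → (∀ a ∈ A, 0 ≤ a) → A.Pairwise (fun a b => a ⊓ b = 0) → ∃ s, IsLUB A s

theorem OrderComplete.exists_isLUB {X : Type*} [SemilatticeSup X] (hX : OrderComplete X) {S : Set X}
    (hne : S.Nonempty) (hbdd : BddAbove S) : ∃ s, IsLUB S s := by
  obtain ⟨z₀, hz₀⟩ := hne
  have hub : upperBounds ((· ⊔ z₀) '' S) = upperBounds S := by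
    ext u
    simp only [mem_upperBounds, forall_mem_image, sup_le_iff]
    exact ⟨fun h z hz => (h hz).1, fun h z hz => ⟨h z hz, h z₀ hz₀⟩⟩
  obtain ⟨s, hs⟩ := hX ((· ⊔ z₀) '' S) ⟨_, mem_image_of_mem _ hz₀⟩
    ⟨z₀, forall_mem_image.2 fun _ _ => le_sup_right⟩ (by rwa [BddAbove, hub])
  exact ⟨s, by rwa [IsLUB, ← hub]⟩

theorem LaterallyComplete.exists_nonneg_forall_le {X ι : Type*} [SemilatticeInf X] [Zero X]
    (hX : LaterallyComplete X) {p : ι → X} (hp : ∀ i, 0 ≤ p i)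
    (hdisj : Pairwise fun i j => p i ⊓ p j = 0) : ∃ b, 0 ≤ b ∧ ∀ i, p i ≤ b := by
  rcases isEmpty_or_nonempty ι with hι | ⟨⟨i₀⟩⟩
  · exact ⟨0, le_rfl, fun i => hι.elim i⟩
  · obtain ⟨b, hb⟩ := hX (range p) ⟨_, mem_range_self i₀⟩ (forall_mem_range.2 hp) <| by
      rintro _ ⟨i, rfl⟩ _ ⟨j, rfl⟩ hne
      exact hdisj (ne_of_apply_ne p hne)
    exact ⟨b, (hp i₀).trans (hb.1 (mem_range_self i₀)), fun i => hb.1 (mem_range_self i)⟩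

end Completeness

section DisjointSystems

variable {X : Type*} [SemilatticeInf X] [Zero X]

theorem inf_eq_zero_of_le {a b w : X} (ha : 0 ≤ a) (hab : a ≤ b) (h : b ⊓ w = 0) : a ⊓ w = 0 :=
  le_antisymm ((inf_le_inf_right w hab).trans_eq h) (le_inf ha (h.symm.trans_le inf_le_right))

/-- A complete disjoint system (maximal orthogonal system): mutually disjoint strictly positive
elements such that `0` is the only positive element disjoint from all of them. The bands they
generate are where a net is controlled piece by piece. -/
structure IsCompleteDisjointSystem (V : Set X) : Prop where
  pos : ∀ v ∈ V, 0 < v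
  pairwise : V.Pairwise fun v w => v ⊓ w = 0
  eq_zero_of_forall_inf_eq_zero : ∀ u, 0 ≤ u → (∀ v ∈ V, u ⊓ v = 0) → u = 0

theorem exists_isCompleteDisjointSystem_subset {G : Set X}
    (hG : ∀ u, 0 < u → ∃ v ∈ G, 0 < v ∧ v ≤ u) : ∃ V ⊆ G, IsCompleteDisjointSystem V := by
  obtain ⟨V, hV⟩ := zorn_subset
      {V : Set X | (∀ v ∈ V, v ∈ G ∧ 0 < v) ∧ V.Pairwise fun v w => v ⊓ w = 0}
      fun C hC hchain => ⟨⋃₀ C, ⟨fun v ⟨W, hW, hv⟩ => (hC hW).1 v hv,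
        (pairwise_sUnion hchain.directedOn).2 fun W hW => (hC hW).2⟩,
        fun W hW => subset_sUnion_of_mem hW⟩
  obtain ⟨hVG, hVdisj⟩ := hV.prop
  refine ⟨V, fun v hv => (hVG v hv).1, fun v hv => (hVG v hv).2, hVdisj, fun u hu huV => ?_⟩
  by_contra hu0
  obtain ⟨v, hvG, hv0, hvu⟩ := hG u (hu.lt_of_ne' hu0)
  have hvV : ∀ w ∈ V, v ⊓ w = 0 := fun w hw => inf_eq_zero_of_le hv0.le hvu (huV w hw)
  have hmem : v ∈ V := hV.le_of_ge (y := insert v V)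
    ⟨forall_mem_insert.2 ⟨⟨hvG, hv0⟩, hVG⟩,
      hVdisj.insert fun w hw _ => ⟨hvV w hw, inf_comm w v ▸ hvV w hw⟩⟩
    (subset_insert v V) (mem_insert v V)
  exact hv0.ne' (inf_idem v ▸ hvV v hmem)

end DisjointSystems

section LatticeOrderedGroup

variable {X : Type*} [Lattice X] [AddCommGroup X]

/-- The truncation of `x` to the order interval `[-b, b]`, meaningful for `0 ≤ b`; it turns uo-Cauchy
nets into order Cauchy ones. -/
def truncation (b x : X) : X := x ⊓ b ⊔ -b

variable [AddLeftMono X]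

theorem add_inf_le {a b y : X} (ha : 0 ≤ a) (hb : 0 ≤ b) (hy : 0 ≤ y) :
    (a + b) ⊓ y ≤ a ⊓ y + b ⊓ y := by
  rw [add_inf, inf_add, inf_add]
  exact le_inf (le_inf inf_le_left (inf_le_right.trans (le_add_of_nonneg_right hb)))
    (inf_le_right.trans (le_inf (le_add_of_nonneg_left ha) (le_add_of_nonneg_left hy)))

theorem add_inf_eq_zero {a b w : X} (ha : a ⊓ w = 0) (hb : b ⊓ w = 0) : (a + b) ⊓ w = 0 := by
  have ha0 : 0 ≤ a := ha.symm.trans_le inf_le_left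
  have hb0 : 0 ≤ b := hb.symm.trans_le inf_le_left
  have hw0 : 0 ≤ w := ha.symm.trans_le inf_le_right
  refine le_antisymm ?_ (le_inf (add_nonneg ha0 hb0) hw0)
  simpa only [ha, hb, add_zero] using add_inf_le ha0 hb0 hw0

theorem isLUB_image_inf {S : Set X} {p : X} (hS : IsLUB S p) (w : X) :
    IsLUB ((· ⊓ w) '' S) (p ⊓ w) := by
  refine ⟨forall_mem_image.2 fun s hs => inf_le_inf_right w (hS.1 hs), fun u hu => ?_⟩
  have hp : p ≤ u + p ⊔ w - w := hS.2 fun s hs => by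
    rw [le_sub_iff_add_le, ← inf_add_sup]
    exact add_le_add (hu (mem_image_of_mem _ hs)) (sup_le_sup_right (hS.1 hs) w)
  rwa [le_sub_iff_add_le, ← inf_add_sup, add_le_add_iff_right] at hp

theorem inf_eq_zero_of_isLUB {S : Set X} {p w : X} (hne : S.Nonempty) (hS : IsLUB S p)
    (h : ∀ s ∈ S, s ⊓ w = 0) : p ⊓ w = 0 := by
  have himage : (· ⊓ w) '' S = {0} := by
    rw [image_congr h, hne.image_const]
  exact (himage ▸ isLUB_image_inf hS w).unique isLUB_singleton

theorem isGLB_add {A B : Set X} {a b : X} (hA : IsGLB A a) (hB : IsGLB B b) :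
    IsGLB (image2 (· + ·) A B) (a + b) := by
  refine ⟨forall_mem_image2.2 fun s hs t ht => add_le_add (hA.1 hs) (hB.1 ht), fun w hw => ?_⟩
  have hwB : ∀ s ∈ A, w - s ≤ b := fun s hs =>
    hB.2 fun t ht => sub_le_iff_le_add'.2 (hw (mem_image2_of_mem hs ht))
  exact sub_le_iff_le_add.1 (hA.2 fun s hs => sub_le_comm.1 (hwB s hs))

theorem posPart_sub_le (a b c : X) : (a - c)⁺ ≤ (a - b)⁺ + (b - c)⁺ := by
  refine sup_le ?_ (add_nonneg (posPart_nonneg _) (posPart_nonneg _))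
  rw [← sub_add_sub_cancel a b c]
  exact add_le_add (le_posPart _) (le_posPart _)

theorem posPart_sub_inf_posPart_sub (d u a : X) : (d - a)⁺ ⊓ (u - a)⁺ = (d ⊓ u - a)⁺ := by
  let _ := AddCommGroup.toDistribLattice X
  rw [posPart_def, posPart_def, posPart_def, inf_sub, sup_inf_right]

theorem abs_truncation_le {b : X} (hb : 0 ≤ b) (x : X) : |truncation b x| ≤ b :=
  abs_le'.2 ⟨sup_le inf_le_right (neg_le_self hb), neg_le.1 le_sup_right⟩

theorem abs_truncation_sub_truncation_le (b x y : X) :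
    |truncation b x - truncation b y| ≤ |x - y| :=
  (abs_sup_sub_sup_le_abs _ _ _).trans (abs_inf_sub_inf_le_abs _ _ _)

theorem abs_sub_truncation_le (b x : X) : |x - truncation b x| ≤ (|x| - b)⁺ := by
  refine abs_le'.2 ⟨?_, ?_⟩
  · calc x - truncation b x ≤ x - x ⊓ b := sub_le_sub_left le_sup_left x
      _ = (x - b)⁺ := by rw [inf_eq_sub_posPart_sub, sub_sub_cancel]
      _ ≤ (|x| - b)⁺ := posPart_mono (sub_le_sub_right (le_abs_self x) b)
  · rw [neg_sub, truncation, sup_sub]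
    refine sup_le ((sub_nonpos.2 inf_le_left).trans (posPart_nonneg _)) ?_
    calc -b - x = -x - b := by abel
      _ ≤ |x| - b := sub_le_sub_right (neg_le_abs x) b
      _ ≤ (|x| - b)⁺ := le_posPart _

theorem OrderComplete.exists_band_projection (hX : OrderComplete X) {v c : X}
    (hv : 0 ≤ v) (hc : 0 ≤ c) :
    ∃ p, 0 ≤ p ∧ p ≤ c ∧ (c - p) ⊓ v = 0 ∧ ∀ w, v ⊓ w = 0 → p ⊓ w = 0 := by
  let S : Set X := {z | 0 ≤ z ∧ z ≤ c ∧ ∀ w, v ⊓ w = 0 → z ⊓ w = 0}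
  have hS0 : 0 ∈ S := ⟨le_rfl, hc, fun w h => inf_eq_left.2 (h.symm.trans_le inf_le_right)⟩
  obtain ⟨p, hp⟩ := hX.exists_isLUB ⟨0, hS0⟩ ⟨c, fun z hz => hz.2.1⟩
  have hp0 : 0 ≤ p := hp.1 hS0
  have hpc : p ≤ c := hp.2 fun z hz => hz.2.1
  have hpdisj : ∀ w, v ⊓ w = 0 → p ⊓ w = 0 := fun w h =>
    inf_eq_zero_of_isLUB ⟨0, hS0⟩ hp fun z hz => hz.2.2 w h
  have hrest0 : 0 ≤ (c - p) ⊓ v := le_inf (sub_nonneg.2 hpc) hv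
  have hmem : p + (c - p) ⊓ v ∈ S :=
    ⟨add_nonneg hp0 hrest0, le_sub_iff_add_le'.1 inf_le_left, fun w h =>
      add_inf_eq_zero (hpdisj w h) (inf_eq_zero_of_le hrest0 inf_le_right h)⟩
  exact ⟨p, hp0, hpc, le_antisymm (add_le_iff_nonpos_right p |>.1 (hp.1 hmem)) hrest0, hpdisj⟩

theorem exists_forall_posPart_sub_inf_eq_zero {ι : Type*} (hoc : OrderComplete X)
    (hlc : LaterallyComplete X) {v c : ι → X} (hv : ∀ i, 0 ≤ v i)
    (hdisj : Pairwise fun i j => v i ⊓ v j = 0) (hc : ∀ i, 0 ≤ c i) :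
    ∃ b, 0 ≤ b ∧ ∀ i, (c i - b)⁺ ⊓ v i = 0 := by
  choose p hp0 hpc hres hp using fun i => hoc.exists_band_projection (hv i) (hc i)
  have hpp : Pairwise fun i j => p i ⊓ p j = 0 := fun i j hij =>
    hp i _ <| inf_comm (p j) _ ▸ hp j _ (hdisj hij.symm)
  obtain ⟨b, hb0, hb⟩ := hlc.exists_nonneg_forall_le hp0 hpp
  exact ⟨b, hb0, fun i => inf_eq_zero_of_le (posPart_nonneg _)
    (sup_le (sub_le_sub_left (hb i) _) (sub_nonneg.2 (hpc i))) (hres i)⟩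

end LatticeOrderedGroup

section Nets

variable {X : Type*} [Lattice X] [AddCommGroup X] {Γ : Type*} [Preorder Γ]

theorem OrderTendsto.nonempty {x : Γ → X} {l : X} (h : OrderTendsto x l) : Nonempty Γ := by
  obtain ⟨A, ⟨a, ha⟩, -, -, hA⟩ := h
  exact (hA a ha).nonempty

theorem OrderTendsto.of_abs_sub_le {x y : Γ → X} {l m : X} (h : OrderTendsto x l)
    (hyx : ∀ α, |y α - m| ≤ |x α - l|) : OrderTendsto y m := by
  obtain ⟨A, hne, hdir, hglb, hA⟩ := h
  refine ⟨A, hne, hdir, hglb, fun a ha => ?_⟩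
  obtain ⟨α₀, hα₀⟩ := hA a ha
  exact ⟨α₀, fun α hα => (hyx α).trans (hα₀ α hα)⟩

theorem UoCauchy.nonempty {x : Γ → X} (hx : UoCauchy x) : Nonempty Γ :=
  (hx 0 le_rfl).nonempty.map Prod.fst

/-- The net `x` is eventually bounded by `c` on the band generated by `v`: the part of `|x α|`
exceeding `c` is eventually disjoint from `v`. Disjointness from `v` replaces the projection onto
that band. -/
def EventuallyBddOnBand (x : Γ → X) (c v : X) : Prop :=
  ∀ᶠ α in atTop, (|x α| - c)⁺ ⊓ v = 0

variable [AddLeftMono X]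

theorem OrderTendsto.add [IsDirectedOrder Γ] {x y : Γ → X} {l m : X} (hx : OrderTendsto x l)
    (hy : OrderTendsto y m) : OrderTendsto (x + y) (l + m) := by
  obtain ⟨A, hAne, hAdir, hAglb, hA⟩ := hx
  obtain ⟨B, hBne, hBdir, hBglb, hB⟩ := hy
  refine ⟨image2 (· + ·) A B, hAne.image2 hBne, ?_, add_zero (0 : X) ▸ isGLB_add hAglb hBglb, ?_⟩
  · rintro _ ⟨a, ha, b, hb, rfl⟩ _ ⟨a', ha', b', hb', rfl⟩
    obtain ⟨a'', ha'', haa'', ha'a''⟩ := hAdir a ha a' ha'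
    obtain ⟨b'', hb'', hbb'', hb'b''⟩ := hBdir b hb b' hb'
    exact ⟨a'' + b'', mem_image2_of_mem ha'' hb'', add_le_add haa'' hbb'', add_le_add ha'a'' hb'b''⟩
  · rintro _ ⟨a, ha, b, hb, rfl⟩
    obtain ⟨α, hα⟩ := hA a ha
    obtain ⟨β, hβ⟩ := hB b hb
    obtain ⟨γ, hαγ, hβγ⟩ := exists_ge_ge α β
    refine ⟨γ, fun δ hδ => ?_⟩
    calc |(x + y) δ - (l + m)| = |(x δ - l) + (y δ - m)| := by
          rw [Pi.add_apply, add_sub_add_comm]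
      _ ≤ |x δ - l| + |y δ - m| := abs_add_le _ _
      _ ≤ a + b := add_le_add (hα δ (hαγ.trans hδ)) (hβ δ (hβγ.trans hδ))

theorem OrderTendsto.uoTendsto {x : Γ → X} {l : X} (h : OrderTendsto x l) : UoTendsto x l := by
  intro y hy
  refine h.of_abs_sub_le fun α => ?_
  rw [sub_zero, abs_of_nonneg (le_inf (abs_nonneg _) hy)]
  exact inf_le_left

theorem UoTendsto.add [IsDirectedOrder Γ] {x y : Γ → X} {l m : X} (hx : UoTendsto x l)
    (hy : UoTendsto y m) : UoTendsto (x + y) (l + m) := by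
  intro u hu
  refine (add_zero (0 : X) ▸ (hx u hu).add (hy u hu)).of_abs_sub_le fun α => ?_
  have hnonneg : ∀ z : X, 0 ≤ |z| ⊓ u := fun z => le_inf (abs_nonneg z) hu
  rw [sub_zero, sub_zero, Pi.add_apply, Pi.add_apply, abs_of_nonneg (hnonneg _),
    abs_of_nonneg (add_nonneg (hnonneg _) (hnonneg _)), add_sub_add_comm]
  exact (inf_le_inf_right u (abs_add_le _ _)).trans (add_inf_le (abs_nonneg _) (abs_nonneg _) hu)

theorem orderTendsto_zero_of_isGLB [IsDirectedOrder Γ] [Nonempty Γ] {z : Γ → X} (hz : ∀ α, 0 ≤ z α)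
    (hne : {a | ∀ᶠ α in atTop, z α ≤ a}.Nonempty)
    (hglb : IsGLB {a | ∀ᶠ α in atTop, z α ≤ a} 0) : OrderTendsto z 0 := by
  refine ⟨_, hne, fun a ha b hb => ?_, hglb, fun a ha => ?_⟩
  · exact ⟨a ⊓ b, (ha.and hb).mono fun α h => le_inf h.1 h.2, inf_le_left, inf_le_right⟩
  · simpa only [sub_zero, abs_of_nonneg (hz _)] using eventually_atTop.1 ha

theorem OrderComplete.exists_orderTendsto [IsDirectedOrder Γ] (hX : OrderComplete X) {t : Γ → X}
    (ht : OrderCauchy t) : ∃ l, OrderTendsto t l := by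
  obtain ⟨α₀, -⟩ := ht.nonempty
  have : Nonempty Γ := ⟨α₀⟩
  obtain ⟨A, ⟨a₀, ha₀⟩, hdir, hglb, hA⟩ := ht
  let S : Set X := {z | ∀ᶠ γ in atTop, z ≤ t γ}
  have hS : ∀ a ∈ A, ∃ α, ∀ β, α ≤ β → t β - a ∈ S ∧ t β + a ∈ upperBounds S := by
    intro a ha
    obtain ⟨⟨α, γ₀⟩, h⟩ := hA a ha
    refine ⟨α, fun β hβ => ?_⟩
    have hclose : ∀ᶠ γ in atTop, t β - t γ ≤ a ∧ -(t β - t γ) ≤ a :=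
      (eventually_ge_atTop γ₀).mono fun γ hγ => abs_le'.1 (sub_zero (t β - t γ) ▸ h (β, γ) ⟨hβ, hγ⟩)
    refine ⟨hclose.mono fun γ hγ => sub_le_comm.1 hγ.1, fun z hz => ?_⟩
    obtain ⟨γ, hzγ, -, hγ⟩ := (Eventually.and hz hclose).exists
    exact hzγ.trans (sub_le_iff_le_add'.1 (neg_sub (t β) (t γ) ▸ hγ))
  obtain ⟨α, hα⟩ := hS a₀ ha₀
  obtain ⟨l, hl⟩ := hX.exists_isLUB ⟨_, (hα α le_rfl).1⟩ ⟨_, (hα α le_rfl).2⟩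
  refine ⟨l, A, ⟨a₀, ha₀⟩, hdir, hglb, fun a ha => ?_⟩
  obtain ⟨α, hα⟩ := hS a ha
  refine ⟨α, fun β hβ => abs_le'.2 ⟨sub_le_comm.1 (hl.1 (hα β hβ).1), ?_⟩⟩
  rw [neg_sub, sub_le_iff_le_add']
  exact hl.2 (hα β hβ).2

theorem IsCompleteDisjointSystem.uoTendsto_zero [IsDirectedOrder Γ] [Nonempty Γ] {V : Set X}
    (hV : IsCompleteDisjointSystem V) (hX : OrderComplete X) {z : Γ → X}
    (hz : ∀ v ∈ V, ∀ᶠ α in atTop, |z α| ⊓ v = 0) : UoTendsto z 0 := by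
  intro y hy
  simp only [sub_zero]
  have hnonneg : ∀ α, 0 ≤ |z α| ⊓ y := fun α => le_inf (abs_nonneg _) hy
  refine orderTendsto_zero_of_isGLB hnonneg ⟨y, .of_forall fun _ => inf_le_right⟩ ⟨?_, ?_⟩
  · intro a ha
    obtain ⟨α, hα⟩ := Eventually.exists ha
    exact (hnonneg α).trans hα
  intro w hw
  refine posPart_eq_zero.1 (hV.eq_zero_of_forall_inf_eq_zero _ (posPart_nonneg w) fun v hv => ?_)
  obtain ⟨β, hβ⟩ := eventually_atTop.1 (hz v hv)
  let S : Set X := (fun α => |z α| ⊓ y) '' Ici β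
  have hSne : S.Nonempty := nonempty_Ici.image _
  obtain ⟨s, hs⟩ := hX.exists_isLUB hSne ⟨y, forall_mem_image.2 fun _ _ => inf_le_right⟩
  have hsv : s ⊓ v = 0 := inf_eq_zero_of_isLUB hSne hs <| forall_mem_image.2 fun α hα =>
    inf_eq_zero_of_le (hnonneg α) inf_le_left (hβ α hα)
  have hws : w ≤ s :=
    hw ((eventually_ge_atTop β).mono fun α hα => hs.1 (mem_image_of_mem _ hα))
  exact inf_eq_zero_of_le (posPart_nonneg w) (sup_le hws (hsv.symm.trans_le inf_le_left)) hsv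

theorem EventuallyBddOnBand.trans {x : Γ → X} {b c v : X} (hx : EventuallyBddOnBand x c v)
    (hcb : (c - b)⁺ ⊓ v = 0) : EventuallyBddOnBand x b v :=
  hx.mono fun α hα => inf_eq_zero_of_le (posPart_nonneg _) (posPart_sub_le |x α| c b)
    (add_inf_eq_zero hα hcb)

theorem EventuallyBddOnBand.abs_sub_truncation_inf_eq_zero {x : Γ → X} {b v : X}
    (hx : EventuallyBddOnBand x b v) :
    ∀ᶠ α in atTop, |x α - truncation b (x α)| ⊓ v = 0 :=
  hx.mono fun α hα => inf_eq_zero_of_le (abs_nonneg _) (abs_sub_truncation_le b (x α)) hα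

theorem UoCauchy.exists_eventuallyBddOnBand {x : Γ → X} (hx : UoCauchy x)
    {u : X} (hu : 0 < u) :
    ∃ v, (∃ c, 0 ≤ c ∧ EventuallyBddOnBand x c v) ∧ 0 < v ∧ v ≤ u := by
  obtain ⟨A, -, -, hglb, hA⟩ := hx u hu.le
  obtain ⟨a, ha, hua⟩ : ∃ a ∈ A, ¬u ≤ a := by
    by_contra! hcon
    exact hu.not_ge (hglb.2 hcon)
  have ha0 : 0 ≤ a := hglb.1 ha
  obtain ⟨⟨α₁, α₀⟩, hclose⟩ := hA a ha
  refine ⟨(u - a)⁺, ⟨|x α₀| + a, add_nonneg (abs_nonneg _) ha0, ?_⟩,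
    (posPart_nonneg _).lt_of_ne' (mt posPart_eq_zero.1 (mt sub_nonpos.1 hua)),
    sup_le (sub_le_self u ha0) hu.le⟩
  refine (eventually_ge_atTop α₁).mono fun α hα => ?_
  have hle : |x α - x α₀| ⊓ u ≤ a := by
    simpa only [sub_zero] using (le_abs_self _).trans (hclose (α, α₀) ⟨hα, le_rfl⟩)
  have hdisj : (|x α - x α₀| - a)⁺ ⊓ (u - a)⁺ = 0 := by
    rw [posPart_sub_inf_posPart_sub, posPart_eq_zero, sub_nonpos]
    exact hle
  refine inf_eq_zero_of_le (posPart_nonneg _) (posPart_mono ?_) hdisj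
  rw [← sub_sub]
  exact sub_le_sub_right ((le_abs_self _).trans (abs_abs_sub_abs_le _ _)) a

theorem UoCauchy.orderCauchy_truncation {x : Γ → X} (hx : UoCauchy x) {b : X} (hb : 0 ≤ b) :
    OrderCauchy fun α => truncation b (x α) := by
  have hbb : 0 ≤ b + b := add_nonneg hb hb
  refine (hx (b + b) hbb).of_abs_sub_le fun p => ?_
  simp only [sub_zero]
  rw [abs_of_nonneg (le_inf (abs_nonneg _) hbb)]
  refine le_inf (abs_truncation_sub_truncation_le _ _ _) ?_
  calc |truncation b (x p.1) - truncation b (x p.2)|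
      ≤ |truncation b (x p.1)| + |truncation b (x p.2)| := by
        simpa only [sub_eq_add_neg, abs_neg] using
          abs_add_le (truncation b (x p.1)) (-truncation b (x p.2))
    _ ≤ b + b := add_le_add (abs_truncation_le hb _) (abs_truncation_le hb _)

theorem UoCauchy.exists_isCompleteDisjointSystem {x : Γ → X} (hx : UoCauchy x)
    (hoc : OrderComplete X) (hlc : LaterallyComplete X) :
    ∃ V : Set X, IsCompleteDisjointSystem V ∧
      ∃ b, 0 ≤ b ∧ ∀ v ∈ V, EventuallyBddOnBand x b v := by
  obtain ⟨V, hVx, hV⟩ := exists_isCompleteDisjointSystem_subset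
    (G := {v | ∃ c, 0 ≤ c ∧ EventuallyBddOnBand x c v}) fun _ hu => hx.exists_eventuallyBddOnBand hu
  choose c hc hxc using fun v : V => hVx v.2
  obtain ⟨b, hb, hcb⟩ := exists_forall_posPart_sub_inf_eq_zero hoc hlc
    (fun v : V => (hV.pos v v.2).le)
    (fun v w hvw => hV.pairwise v.2 w.2 (Subtype.coe_ne_coe.2 hvw)) hc
  exact ⟨V, hV, b, hb, fun v hv => (hxc ⟨v, hv⟩).trans (hcb ⟨v, hv⟩)⟩

end Nets

theorem stmt7_general {X : Type*} [Lattice X] [AddCommGroup X] [AddLeftMono X]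
    (hoc : OrderComplete X) (hlc : LaterallyComplete X)
    {Γ : Type*} [Preorder Γ] [IsDirectedOrder Γ] {x : Γ → X} (hx : UoCauchy x) :
    ∃ l, UoTendsto x l := by
  have := hx.nonempty
  obtain ⟨V, hV, b, hb, hxb⟩ := hx.exists_isCompleteDisjointSystem hoc hlc
  obtain ⟨l, hl⟩ := hoc.exists_orderTendsto (hx.orderCauchy_truncation hb)
  have hdiff : UoTendsto (fun α => x α - truncation b (x α)) 0 :=
    hV.uoTendsto_zero hoc fun v hv => (hxb v hv).abs_sub_truncation_inf_eq_zero
  have hsum : (fun α => x α - truncation b (x α)) + (fun α => truncation b (x α)) = x :=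
    funext fun α => sub_add_cancel (x α) _
  exact ⟨l, hsum ▸ zero_add l ▸ hdiff.add hl.uoTendsto⟩

/-- A universally complete vector lattice with the countable sup property
is uo-complete: every uo-Cauchy net uo-converges to some element. -/
theorem stmt7 {X : Type*} [Lattice X] [AddCommGroup X]
    [CovariantClass X X (· + ·) (· ≤ ·)] [Module ℝ X] [PosSMulMono ℝ X]
    (harch : VLArchimedean X)
    -- `X` is order complete:
    (hdc : ∀ S : Set X, S.Nonempty → BddBelow S → BddAbove S → ∃ s, IsLUB S s)
    -- `X` is laterally complete:
    (hlat : ∀ A : Set X, A.Nonempty → (∀ a ∈ A, 0 ≤ a) →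
      A.Pairwise (fun a b => a ⊓ b = 0) → ∃ s, IsLUB A s)
    -- `X` has the countable sup property:
    (hcsp : ∀ (A : Set X) (s : X), IsLUB A s → ∃ C ⊆ A, C.Countable ∧ IsLUB C s)
    {Γ : Type*} [Preorder Γ] [IsDirected Γ (· ≤ ·)] [Nonempty Γ]
    (x : Γ → X) (hx : UoCauchy x) :
    ∃ l, UoTendsto x l :=
  stmt7_general hdc hlat hx
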